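/- Let Ω ⊂ ℝⁿ be a bounded domain and let u ∈ C⁴(Ω) ∩ C²(Ω̄) be a k-convex solution of S_k(D²u) = 1 in Ω. Then the supremum of Δu over Ω̄ is attained on the boundary: sup_{Ω̄} Δu = sup_{∂Ω} Δu. -/

import Mathlib

open scoped Classical Topology
open Real Filter MeasureTheory

noncomputable section

/-- Euclidean space ℝⁿ. -/
abbrev Euc (n : ℕ) : Type := EuclideanSpace ℝ (Fin n)

/-- The standard basis vector `e i`. -/
def ebasis (n : ℕ) (i : Fin n) : Euc n := EuclideanSpace.single i 1

/-- The Hessian matrix `D²u(x)`. -/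
def hessMat (n : ℕ) (u : Euc n → ℝ) (x : Euc n) : Matrix (Fin n) (Fin n) ℝ :=
  Matrix.of fun i j => iteratedFDeriv ℝ 2 u x ![ebasis n i, ebasis n j]

/-- The Laplacian `Δu(x)` (trace of the Hessian). -/
def lapl (n : ℕ) (u : Euc n → ℝ) (x : Euc n) : ℝ := ∑ i, hessMat n u x i i

/-- The `k`-th elementary symmetric function of the eigenvalues of an `n × n` matrix,
expressed through the coefficients of the characteristic polynomial. -/
def matSk (n k : ℕ) (M : Matrix (Fin n) (Fin n) ℝ) : ℝ :=
  (-1 : ℝ) ^ k * (Matrix.charpoly M).coeff (n - k)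

/-- `S_k(D²u)(x)`. -/
def SkHess (n k : ℕ) (u : Euc n → ℝ) (x : Euc n) : ℝ := matSk n k (hessMat n u x)

/-- `u` is `k`-convex on `U`: the eigenvalues of the Hessian lie in the Gårding cone `Γ_k`. -/
def KConvexOn (n k : ℕ) (u : Euc n → ℝ) (U : Set (Euc n)) : Prop :=
  ∀ x ∈ U, ∀ j : ℕ, 1 ≤ j → j ≤ k → 0 < matSk n j (hessMat n u x)

/-- Membership in the class `𝒜_k`: symmetric positive definite with `S_k(λ(A)) = 1`. -/
def MemA (n k : ℕ) (A : Matrix (Fin n) (Fin n) ℝ) : Prop :=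
  A.IsSymm ∧ A.PosDef ∧ matSk n k A = 1

/-- The quadratic form `½ xᵀ A x`. -/
def quadA (n : ℕ) (A : Matrix (Fin n) (Fin n) ℝ) (x : Euc n) : ℝ :=
  (1 / 2) * ∑ i, ∑ j, x i * A i j * x j

/-- The linear form `b ⋅ x`. -/
def linB (n : ℕ) (b x : Euc n) : ℝ := ∑ i, b i * x i

/-- `λ_max(A) < c`, expressed through the quadratic form (for symmetric `A`). -/
def lambdaMaxLT (n : ℕ) (A : Matrix (Fin n) (Fin n) ℝ) (c : ℝ) : Prop :=
  ∀ x : Euc n, x ≠ 0 → ∑ i, ∑ j, x i * A i j * x j < c * ‖x‖ ^ 2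

/-- `u` is smooth on an open neighbourhood of the (closed) set `S`;
this is our rendering of `u ∈ C^∞(S)` for a closed set `S`. -/
def SmoothOnNhd (n : ℕ) (u : Euc n → ℝ) (S : Set (Euc n)) : Prop :=
  ∃ U : Set (Euc n), IsOpen U ∧ S ⊆ U ∧ ContDiffOn ℝ (⊤ : ℕ∞) u U

/-- A smooth bounded strictly convex domain in ℝⁿ. -/
def SmoothStrictConvexDomain (n : ℕ) (Ω : Set (Euc n)) : Prop :=
  IsOpen Ω ∧ Bornology.IsBounded Ω ∧ Ω.Nonempty ∧ Convex ℝ Ω ∧ StrictConvex ℝ Ω ∧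
    ∃ f : Euc n → ℝ, ContDiff ℝ (⊤ : ℕ∞) f ∧ Ω = {x | f x < 0} ∧
      ∀ x ∈ frontier Ω, fderiv ℝ f x ≠ 0

/-- Extension of `u` by the constant value `v` inside `Ω`. -/
def extBy (n : ℕ) (Ω : Set (Euc n)) (v : ℝ) (u : Euc n → ℝ) : Euc n → ℝ :=
  fun x => if x ∈ Ω then v else u x

/-- `u` (vanishing on `∂Ω`) is quasiconvex: all sublevel sets of its zero-extension are convex. -/
def QuasiconvexSol (n : ℕ) (Ω : Set (Euc n)) (u : Euc n → ℝ) : Prop :=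
  ∀ t : ℝ, Convex ℝ {x : Euc n | extBy n Ω 0 u x ≤ t}

/-- The `k`-th elementary symmetric polynomial of a vector `a ∈ ℝⁿ`. -/
def esymmVec (n k : ℕ) (a : Fin n → ℝ) : ℝ :=
  ∑ s ∈ Finset.powersetCard k (Finset.univ : Finset (Fin n)), ∏ i ∈ s, a i

/-- `h_k(a) = max_i S_{k-1}(a)|_{a_i = 0} · a_i`. -/
def hkfun (n k : ℕ) (a : Fin n → ℝ) : ℝ :=
  ⨆ i : Fin n, esymmVec n (k - 1) (Function.update a i 0) * a i

/-- The exponent `-k / (2 h_k(a))`. -/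
def genExp (n k : ℕ) (a : Fin n → ℝ) : ℝ := -(k : ℝ) / (2 * hkfun n k a)

/-- The integrand `(1 + α t^{-k/(2h_k(a))})^{1/k}`. -/
def genInt (n k : ℕ) (a : Fin n → ℝ) (α t : ℝ) : ℝ :=
  (1 + α * t ^ genExp n k a) ^ ((1 : ℝ) / (k : ℝ))

/-- The generalized symmetric function `ū`. -/
def ubar (n k : ℕ) (a : Fin n → ℝ) (R₀ α : ℝ) (x : Euc n) : ℝ :=
  ∫ t in R₀..(quadA n (Matrix.diagonal a) x), genInt n k a α t

/-- `μ(α) = ∫_{R₀}^∞ ((1 + α t^{-k/(2h_k(a))})^{1/k} - 1) dt - R₀`. -/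
def muA (n k : ℕ) (a : Fin n → ℝ) (R₀ α : ℝ) : ℝ :=
  (∫ t in Set.Ioi R₀, (genInt n k a α t - 1)) - R₀

/-- The ellipsoid `E_R(xb) = {x : ½ (x - xb)ᵀ A (x - xb) < R}`. -/
def ESet (n : ℕ) (A : Matrix (Fin n) (Fin n) ℝ) (xb : Euc n) (R : ℝ) : Set (Euc n) :=
  {x : Euc n | quadA n A (x - xb) < R}

/-- The non-concentric convex ring `Ω_R^ε = E_R(0) ∖ B̄_ε(x₀)`. -/
def OmegaRe (n : ℕ) (a : Fin n → ℝ) (x₀ : Euc n) (ε R : ℝ) : Set (Euc n) :=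
  ESet n (Matrix.diagonal a) 0 R \ closure (Metric.ball x₀ ε)

/-- `u` is a `k`-convex solution of the approximating problem
`S_k(D²u) = 1` in `Ω_R^ε`, `u = 0` on `∂B_ε(x₀)`, `u = ū` on `∂E_R(0)`. -/
def ApproxSol (n k : ℕ) (a : Fin n → ℝ) (x₀ : Euc n) (ε R R₀ α : ℝ)
    (u : Euc n → ℝ) : Prop :=
  SmoothOnNhd n u (closure (OmegaRe n a x₀ ε R)) ∧
  KConvexOn n k u (OmegaRe n a x₀ ε R) ∧
  (∀ x ∈ OmegaRe n a x₀ ε R, SkHess n k u x = 1) ∧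
  (∀ x ∈ Metric.sphere x₀ ε, u x = 0) ∧
  (∀ x : Euc n, quadA n (Matrix.diagonal a) x = R → u x = ubar n k a R₀ α x)

/-- The constant `C_ε` of the boundary gradient estimate. -/
def Ceps (n k : ℕ) (C ε : ℝ) : ℝ :=
  if 2 * k < n then C * ((n : ℝ) / (k : ℝ) - 2) * ε⁻¹
  else if 2 * k = n then C * ε⁻¹ * |Real.log ε|⁻¹
  else C * (2 - (n : ℝ) / (k : ℝ)) * ε ^ (1 - (n : ℝ) / (k : ℝ))

/-- `u` is a `k`-convex solution of the exterior Dirichlet problem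
`S_k(D²u) = 1` in `ℝⁿ ∖ B̄_ε(x₀)`, `u = 0` on `∂B_ε(x₀)`, with quadratic asymptotics
`½ xᵀAx + c` at infinity (`A = diag a`). -/
def ExtBallSol (n k : ℕ) (a : Fin n → ℝ) (x₀ : Euc n) (ε c : ℝ) (u : Euc n → ℝ) : Prop :=
  SmoothOnNhd n u (Metric.ball x₀ ε)ᶜ ∧
  KConvexOn n k u (closure (Metric.ball x₀ ε))ᶜ ∧
  (∀ x ∈ (closure (Metric.ball x₀ ε))ᶜ, SkHess n k u x = 1) ∧
  (∀ x ∈ Metric.sphere x₀ ε, u x = 0) ∧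
  Tendsto (fun x : Euc n => u x - (quadA n (Matrix.diagonal a) x + c))
    (cocompact (Euc n)) (𝓝 0)

/-- `u` is a `k`-convex solution of the exterior Dirichlet problem on `ℝⁿ ∖ Ω₀` with
asymptotics `½ xᵀAx + b·x + c` at infinity. -/
def ExtDomSol (n k : ℕ) (Ω₀ : Set (Euc n)) (A : Matrix (Fin n) (Fin n) ℝ) (b : Euc n)
    (c : ℝ) (u : Euc n → ℝ) : Prop :=
  SmoothOnNhd n u Ω₀ᶜ ∧
  KConvexOn n k u (closure Ω₀)ᶜ ∧
  (∀ x ∈ (closure Ω₀)ᶜ, SkHess n k u x = 1) ∧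
  (∀ x ∈ frontier Ω₀, u x = 0) ∧
  Tendsto (fun x : Euc n => u x - (quadA n A x + linB n b x + c))
    (cocompact (Euc n)) (𝓝 0)

/-- `u` is a solution of the exterior Dirichlet problem for the Laplace equation
`Δu = 1` on `ℝⁿ ∖ Ω₀` with asymptotics `½ xᵀAx + b·x + c` at infinity. -/
def ExtDomSolLap (n : ℕ) (Ω₀ : Set (Euc n)) (A : Matrix (Fin n) (Fin n) ℝ) (b : Euc n)
    (c : ℝ) (u : Euc n → ℝ) : Prop :=
  SmoothOnNhd n u Ω₀ᶜ ∧
  (∀ x ∈ (closure Ω₀)ᶜ, lapl n u x = 1) ∧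
  (∀ x ∈ frontier Ω₀, u x = 0) ∧
  Tendsto (fun x : Euc n => u x - (quadA n A x + linB n b x + c))
    (cocompact (Euc n)) (𝓝 0)

/-- `u` solves the exterior problem `Δu = 0` in `ℝⁿ ∖ Ω̄`, `u = 1` on `∂Ω`,
`u → 0` at infinity. -/
def HarmExtSol (n : ℕ) (Ω : Set (Euc n)) (u : Euc n → ℝ) : Prop :=
  SmoothOnNhd n u Ωᶜ ∧
  (∀ x ∈ (closure Ω)ᶜ, lapl n u x = 0) ∧
  (∀ x ∈ frontier Ω, u x = 1) ∧
  Tendsto u (cocompact (Euc n)) (𝓝 0)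

end

/-!
On the set of symmetric matrices with eigenvalues in `Γ_k`, the superlevel set `{S_k ≥ 1}` is
convex, and adding a positive definite matrix strictly increases `S_k`. Convexity follows from
Gårding's concavity of `log S_k` on vectors: `S_k` is the product of the ratios `S_{j+1} / S_j`,
each of which is superadditive by induction on `j`, and the passage from vectors to matrices is
Schur's observation that diagonals are doubly stochastic images of eigenvalues.

The usual argument differentiates `S_k(D²u) = 1` twice; here second differences of `D²u` replace
its second derivatives. At an interior local maximum of a discrete Laplacian of `u` plus a small
multiple of `|y - z|²`, the matrix `D²u` exceeds the average of its values at the neighbouring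
mesh points by a positive definite matrix, which forces `S_k(D²u) > 1`. Discrete Laplacians
converge locally uniformly to `Δu`, hence `Δu + ε|y|²` has no interior local maximum, and
letting `ε → 0` gives the maximum principle.
-/

/-! ### Newton's inequality -/

section Newton

open Polynomial

theorem splits_derivative {p : ℝ[X]} (hp : p.Splits) : (derivative p).Splits := by
  by_cases hdeg : p.natDegree = 0
  · exact Splits.of_natDegree_eq_zero (by grind [natDegree_derivative_le p])
  · rw [splits_iff_card_roots] at *
    grind [card_roots_le_derivative p, natDegree_derivative_le p, card_roots' (derivative p)]

theorem splits_iterate_derivative {p : ℝ[X]} (hp : p.Splits) (m : ℕ) :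
    (derivative^[m] p).Splits := by
  induction m with
  | zero => exact hp
  | succ m ih => exact Function.iterate_succ_apply' derivative m p ▸ splits_derivative ih

theorem laguerre_inequality {p : ℝ[X]} (hp : p.Splits) (x : ℝ) :
    p.eval x * (derivative (derivative p)).eval x ≤ (derivative p).eval x ^ 2 := by
  induction hp using Submonoid.closure_induction with
  | mem p hp => rcases hp with ⟨a, rfl⟩ | ⟨a, rfl⟩ <;> simp
  | one => simp
  | mul p q _ _ hp hq =>
    simp only [derivative_mul, derivative_add, eval_add, eval_mul]
    nlinarith [mul_nonneg (sq_nonneg (q.eval x)) (sub_nonneg.2 hp),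
      mul_nonneg (sq_nonneg (p.eval x)) (sub_nonneg.2 hq)]

theorem coeff_mul_coeff_le_sq {p : ℝ[X]} (hp : p.Splits) (m : ℕ) :
    p.coeff m * p.coeff (m + 2) ≤ p.coeff (m + 1) ^ 2 := by
  have coeff_eq (j : ℕ) : (derivative^[j] p).eval 0 = j.factorial * p.coeff j := by
    rw [← coeff_zero_eq_eval_zero, coeff_iterate_derivative]
    simp [Nat.descFactorial_self]
  have h := laguerre_inequality (splits_iterate_derivative hp m) 0
  rw [← Function.iterate_succ_apply' derivative, ← Function.iterate_succ_apply' derivative,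
    coeff_eq, coeff_eq, coeff_eq] at h
  have hfac : (0 : ℝ) < m.factorial ^ 2 * (m + 1) := by positivity
  have hweighted : (m + 2) * (p.coeff m * p.coeff (m + 2)) ≤ (m + 1) * p.coeff (m + 1) ^ 2 := by
    refine le_of_mul_le_mul_left ?_ hfac
    simp only [Nat.succ_eq_add_one, Nat.factorial_succ] at h
    push_cast at h
    linarith
  rcases le_total 0 (p.coeff m * p.coeff (m + 2)) with hs | hs
  · nlinarith [hs, (Nat.cast_nonneg m : (0 : ℝ) ≤ m)]
  · exact hs.trans (sq_nonneg _)

theorem newton_inequality (m : Multiset ℝ) (j : ℕ) :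
    m.esymm j * m.esymm (j + 2) ≤ m.esymm (j + 1) ^ 2 := by
  rcases le_or_gt (j + 2) m.card with hj | hj
  · have hp : (m.map fun a => X + C a).prod.Splits :=
      Splits.multisetProd (by simp [Splits.X_add_C])
    have h := coeff_mul_coeff_le_sq hp (m.card - (j + 2))
    rw [m.prod_X_add_C_coeff (by lia), m.prod_X_add_C_coeff (by lia),
      m.prod_X_add_C_coeff (by lia), mul_comm] at h
    convert h using 3 <;> lia
  · rw [Multiset.esymm, Multiset.esymm, Multiset.powersetCard_eq_empty _ hj]
    simpa using sq_nonneg _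

end Newton

/-! ### Elementary symmetric functions and the Gårding cone -/

section ElementarySymmetric

variable {ι : Type*}

/-- The `j`-th elementary symmetric function of the numbers `a i`, `i ∈ s`. The index set is kept
as a parameter because the inductive arguments remove one variable at a time. -/
noncomputable def esymmOn (s : Finset ι) (j : ℕ) (a : ι → ℝ) : ℝ := (s.val.map a).esymm j

@[simp]
theorem esymmOn_zero (s : Finset ι) (a : ι → ℝ) : esymmOn s 0 a = 1 := by
  simp [esymmOn, Multiset.esymm]

@[simp]
theorem esymmOn_empty_succ (j : ℕ) (a : ι → ℝ) : esymmOn ∅ (j + 1) a = 0 := by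
  simp [esymmOn, Multiset.esymm, Multiset.powersetCard_zero_right]

theorem esymmOn_smul (s : Finset ι) (j : ℕ) (c : ℝ) (a : ι → ℝ) :
    esymmOn s j (c • a) = c ^ j * esymmOn s j a := by
  simp [esymmOn, ← smul_eq_mul, Multiset.pow_smul_esymm]

theorem esymmOn_pos {s : Finset ι} {j : ℕ} {a : ι → ℝ} (ha : ∀ i ∈ s, 0 < a i)
    (hj : j ≤ s.card) : 0 < esymmOn s j a := by
  rw [esymmOn, Finset.esymm_map_val]
  exact Finset.sum_pos
    (fun t ht => Finset.prod_pos fun i hi => ha i ((Finset.mem_powersetCard.1 ht).1 hi))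
    (Finset.powersetCard_nonempty.2 hj)

theorem esymmOn_univ_comp_perm [Fintype ι] (σ : Equiv.Perm ι) (j : ℕ) (a : ι → ℝ) :
    esymmOn Finset.univ j (a ∘ σ) = esymmOn Finset.univ j a := by
  rw [esymmOn, ← Multiset.map_map, Multiset.map_univ_val_equiv, esymmOn]

variable [DecidableEq ι]

theorem esymmOn_succ_of_mem {s : Finset ι} {i : ι} (hi : i ∈ s) (j : ℕ) (a : ι → ℝ) :
    esymmOn s (j + 1) a = esymmOn (s.erase i) (j + 1) a + a i * esymmOn (s.erase i) j a := by
  rw [esymmOn, ← Multiset.cons_erase hi, Multiset.map_cons]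
  simp [esymmOn, Multiset.esymm, Multiset.powersetCard_cons, Multiset.sum_map_mul_left]

theorem sum_mul_esymmOn_erase (s : Finset ι) (j : ℕ) (a : ι → ℝ) :
    ∑ i ∈ s, a i * esymmOn (s.erase i) j a = (j + 1) * esymmOn s (j + 1) a := by
  induction s using Finset.induction_on generalizing j with
  | empty => simp
  | insert i s hi ih =>
    rw [Finset.sum_insert hi, esymmOn_succ_of_mem (Finset.mem_insert_self i s),
      Finset.erase_insert hi]
    cases j with
    | zero => simpa [add_comm] using ih 0
    | succ j =>
      have split_term : ∀ l ∈ s, a l * esymmOn ((insert i s).erase l) (j + 1) a =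
          a l * esymmOn (s.erase l) (j + 1) a + a i * (a l * esymmOn (s.erase l) j a) := by
        intro l hl
        have hil : i ≠ l := fun h => hi (h ▸ hl)
        rw [Finset.erase_insert_of_ne hil, esymmOn_succ_of_mem (Finset.mem_insert_self i _),
          Finset.erase_insert (fun h => hi (Finset.mem_of_mem_erase h))]
        ring
      rw [Finset.sum_congr rfl split_term, Finset.sum_add_distrib, ← Finset.mul_sum, ih, ih]
      push_cast
      ring

end ElementarySymmetric

section GardingCone

variable {ι : Type*} {s : Finset ι} {k : ℕ} {a b : ι → ℝ}

/-- The Gårding cone `Γ_k` in the variables indexed by `s`. The condition for `j = 0` holds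
automatically, since the empty product is `1`. -/
def gardingCone (s : Finset ι) (k : ℕ) : Set (ι → ℝ) := {a | ∀ j ≤ k, 0 < esymmOn s j a}

/-- The quotient `S_{k+1} / S_k`, whose concavity on `Γ_{k+1}` is the theorem of Marcus and
Lopes. -/
noncomputable def esymmRatio (s : Finset ι) (k : ℕ) (a : ι → ℝ) : ℝ :=
  esymmOn s (k + 1) a / esymmOn s k a

theorem gardingCone_anti (s : Finset ι) : Antitone (gardingCone s) :=
  fun _ _ hkl _ ha j hj => ha j (hj.trans hkl)

@[simp]
theorem gardingCone_zero (s : Finset ι) : gardingCone s 0 = Set.univ := by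
  simp [gardingCone]

theorem mem_gardingCone_succ :
    a ∈ gardingCone s (k + 1) ↔ a ∈ gardingCone s k ∧ 0 < esymmOn s (k + 1) a :=
  ⟨fun h => ⟨gardingCone_anti s k.le_succ h, h _ le_rfl⟩,
    fun h j hj => (Nat.le_succ_iff_eq_or_le.1 hj).elim (· ▸ h.2) (h.1 j)⟩

theorem smul_mem_gardingCone (ha : a ∈ gardingCone s k) {c : ℝ} (hc : 0 < c) :
    c • a ∈ gardingCone s k := fun j hj => by
  rw [esymmOn_smul]
  exact mul_pos (pow_pos hc j) (ha j hj)

theorem mem_gardingCone_of_pos (ha : ∀ i ∈ s, 0 < a i) (hk : k ≤ s.card) :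
    a ∈ gardingCone s k := fun _ hj => esymmOn_pos ha (hj.trans hk)

theorem esymmRatio_smul {c : ℝ} (hc : c ≠ 0) (a : ι → ℝ) :
    esymmRatio s k (c • a) = c * esymmRatio s k a := by
  rw [esymmRatio, esymmRatio, esymmOn_smul, esymmOn_smul, pow_succ', mul_assoc, mul_div_assoc,
    mul_div_mul_left _ _ (pow_ne_zero k hc)]

theorem esymmRatio_pos (ha : a ∈ gardingCone s (k + 1)) : 0 < esymmRatio s k a :=
  div_pos (ha _ le_rfl) (ha _ k.le_succ)

theorem esymmOn_succ_eq_mul_esymmRatio (ha : a ∈ gardingCone s k) :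
    esymmOn s (k + 1) a = esymmOn s k a * esymmRatio s k a :=
  (mul_div_cancel₀ _ (ha k le_rfl).ne').symm

variable [DecidableEq ι] {i : ι}

theorem mem_gardingCone_erase (ha : a ∈ gardingCone s (k + 1)) (hi : i ∈ s) :
    a ∈ gardingCone (s.erase i) k := by
  induction k with
  | zero => simp
  | succ k ih =>
    have ih := ih (gardingCone_anti s k.succ.le_succ ha)
    refine mem_gardingCone_succ.2 ⟨ih, ?_⟩
    by_contra! hneg
    have hk := ih k le_rfl
    have hsucc := ha (k + 1) k.succ.le_succ
    have hsucc₂ := ha (k + 2) le_rfl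
    have hnewton : esymmOn (s.erase i) k a * esymmOn (s.erase i) (k + 2) a ≤
        esymmOn (s.erase i) (k + 1) a ^ 2 := newton_inequality _ _
    rw [esymmOn_succ_of_mem hi] at hsucc hsucc₂
    nlinarith [mul_pos hk hsucc₂, mul_nonneg (neg_nonneg.2 hneg) hsucc.le]

theorem add_esymmRatio_erase (hi : i ∈ s) (ha : 0 < esymmOn (s.erase i) k a) :
    a i + esymmRatio (s.erase i) k a = esymmOn s (k + 1) a / esymmOn (s.erase i) k a := by
  rw [esymmRatio, esymmOn_succ_of_mem hi]
  field_simp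
  ring

theorem add_esymmRatio_erase_pos (ha : a ∈ gardingCone s (k + 1)) (hi : i ∈ s) :
    0 < a i + esymmRatio (s.erase i) k a := by
  have herase := mem_gardingCone_erase ha hi k le_rfl
  exact add_esymmRatio_erase hi herase ▸ div_pos (ha _ le_rfl) herase

-- Each summand is `q a_i / (a_i + q)` for `q` the ratio without `a_i`, hence concave and
-- increasing in `q`: this is what lets concavity pass from `k` to `k + 1`.
theorem esymmRatio_succ_eq_sum (ha : a ∈ gardingCone s (k + 1)) :
    (k + 2) * esymmRatio s (k + 1) a =
      ∑ i ∈ s, (a i - a i ^ 2 / (a i + esymmRatio (s.erase i) k a)) := by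
  have heuler := sum_mul_esymmOn_erase s (k + 1) a
  have hs := ha (k + 1) le_rfl
  have hsum : (k + 2) * esymmRatio s (k + 1) a =
      (∑ i ∈ s, a i * esymmOn (s.erase i) (k + 1) a) / esymmOn s (k + 1) a := by
    rw [heuler, esymmRatio]
    push_cast
    ring
  rw [hsum, Finset.sum_div]
  refine Finset.sum_congr rfl fun i hi => ?_
  have herase := mem_gardingCone_erase ha hi k le_rfl
  rw [add_esymmRatio_erase hi herase,
    eq_sub_of_add_eq (esymmOn_succ_of_mem hi k a).symm]
  field_simp

theorem sub_sq_div_superadditive {x y p q r : ℝ} (hp : 0 < x + p) (hq : 0 < y + q)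
    (hr : p + q ≤ r) :
    x - x ^ 2 / (x + p) + (y - y ^ 2 / (y + q)) ≤ x + y - (x + y) ^ 2 / (x + y + r) := by
  have hsedrakyan : (x + y) ^ 2 / ((x + p) + (y + q)) ≤ x ^ 2 / (x + p) + y ^ 2 / (y + q) := by
    simpa using Finset.sq_sum_div_le_sum_sq_div Finset.univ ![x, y] (g := ![x + p, y + q])
      (by simp [Fin.forall_fin_two, hp, hq])
  have hanti : (x + y) ^ 2 / (x + y + r) ≤ (x + y) ^ 2 / ((x + p) + (y + q)) :=
    div_le_div_of_nonneg_left (sq_nonneg _) (add_pos hp hq) (by linarith)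
  linarith

theorem esymmRatio_succ_superadditive (ha : a ∈ gardingCone s (k + 2))
    (hb : b ∈ gardingCone s (k + 2)) (hab : a + b ∈ gardingCone s (k + 1))
    (ih : ∀ i ∈ s, esymmRatio (s.erase i) k a + esymmRatio (s.erase i) k b ≤
      esymmRatio (s.erase i) k (a + b)) :
    esymmRatio s (k + 1) a + esymmRatio s (k + 1) b ≤ esymmRatio s (k + 1) (a + b) := by
  have ha := gardingCone_anti s k.succ.le_succ ha
  have hb := gardingCone_anti s k.succ.le_succ hb
  refine le_of_mul_le_mul_left ?_ (by positivity : (0 : ℝ) < k + 2)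
  rw [mul_add, esymmRatio_succ_eq_sum ha, esymmRatio_succ_eq_sum hb, esymmRatio_succ_eq_sum hab,
    ← Finset.sum_add_distrib]
  exact Finset.sum_le_sum fun i hi => sub_sq_div_superadditive (add_esymmRatio_erase_pos ha hi)
    (add_esymmRatio_erase_pos hb hi) (ih i hi)

end GardingCone

section Concavity

variable {ι : Type*} {s : Finset ι} {k : ℕ} {a b : ι → ℝ}

theorem add_mem_gardingCone_succ (ha : a ∈ gardingCone s (k + 1)) (hb : b ∈ gardingCone s (k + 1))
    (hab : a + b ∈ gardingCone s k)
    (hratio : esymmRatio s k a + esymmRatio s k b ≤ esymmRatio s k (a + b)) :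
    a + b ∈ gardingCone s (k + 1) := by
  refine mem_gardingCone_succ.2 ⟨hab, ?_⟩
  rw [esymmOn_succ_eq_mul_esymmRatio hab]
  exact mul_pos (hab k le_rfl)
    ((add_pos (esymmRatio_pos ha) (esymmRatio_pos hb)).trans_le hratio)

theorem add_mem_and_esymmRatio_superadditive (ha : a ∈ gardingCone s (k + 1))
    (hb : b ∈ gardingCone s (k + 1)) :
    a + b ∈ gardingCone s k ∧
      esymmRatio s k a + esymmRatio s k b ≤ esymmRatio s k (a + b) := by
  induction k generalizing s with
  | zero =>
    have esymmOn_one (c : ι → ℝ) : esymmOn s 1 c = ∑ i ∈ s, c i := by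
      simpa using (sum_mul_esymmOn_erase s 0 c).symm
    simp [esymmRatio, esymmOn_one, Finset.sum_add_distrib]
  | succ k ih =>
    have ha' := gardingCone_anti s k.succ.le_succ ha
    have hb' := gardingCone_anti s k.succ.le_succ hb
    have hab : a + b ∈ gardingCone s (k + 1) :=
      add_mem_gardingCone_succ ha' hb' (ih ha' hb').1 (ih ha' hb').2
    exact ⟨hab, esymmRatio_succ_superadditive ha hb hab fun i hi =>
      (ih (mem_gardingCone_erase ha hi) (mem_gardingCone_erase hb hi)).2⟩

theorem add_mem_gardingCone (ha : a ∈ gardingCone s k) (hb : b ∈ gardingCone s k) :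
    a + b ∈ gardingCone s k := by
  cases k with
  | zero => simp
  | succ k =>
    have h := add_mem_and_esymmRatio_superadditive ha hb
    exact add_mem_gardingCone_succ ha hb h.1 h.2

theorem esymmRatio_superadditive (ha : a ∈ gardingCone s (k + 1))
    (hb : b ∈ gardingCone s (k + 1)) :
    esymmRatio s k a + esymmRatio s k b ≤ esymmRatio s k (a + b) :=
  (add_mem_and_esymmRatio_superadditive ha hb).2

theorem convex_gardingCone (s : Finset ι) (k : ℕ) : Convex ℝ (gardingCone s k) :=
  convex_iff_forall_pos.2 fun _ ha _ hb _ _ hx hy _ =>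
    add_mem_gardingCone (smul_mem_gardingCone ha hx) (smul_mem_gardingCone hb hy)

theorem concaveOn_log_esymmRatio (s : Finset ι) (k : ℕ) :
    ConcaveOn ℝ (gardingCone s (k + 1)) fun a => log (esymmRatio s k a) := by
  refine concaveOn_iff_forall_pos.2 ⟨convex_gardingCone s _, fun a ha b hb x y hx hy hxy => ?_⟩
  have hratio := esymmRatio_superadditive (smul_mem_gardingCone ha hx)
    (smul_mem_gardingCone hb hy)
  rw [esymmRatio_smul hx.ne', esymmRatio_smul hy.ne'] at hratio
  have hpa := esymmRatio_pos ha
  have hpb := esymmRatio_pos hb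
  exact (strictConcaveOn_log_Ioi.concaveOn.2 hpa hpb hx.le hy.le hxy).trans
    (log_le_log (by simp only [smul_eq_mul]; positivity) hratio)

theorem concaveOn_log_esymmOn (s : Finset ι) (k : ℕ) :
    ConcaveOn ℝ (gardingCone s k) fun a => log (esymmOn s k a) := by
  induction k with
  | zero => simpa using concaveOn_const (0 : ℝ) convex_univ
  | succ k ih =>
    have hsub : gardingCone s (k + 1) ⊆ gardingCone s k := gardingCone_anti s k.le_succ
    refine ((ih.subset hsub (convex_gardingCone s _)).add (concaveOn_log_esymmRatio s k)).congr
      fun a ha => ?_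
    rw [Pi.add_apply, esymmOn_succ_eq_mul_esymmRatio (hsub ha),
      log_mul (hsub ha k le_rfl).ne' (esymmRatio_pos ha).ne']

/-- The vectors of the Gårding cone `Γ_k` with `S_k ≥ 1`. -/
def gardingSuperlevel (s : Finset ι) (k : ℕ) : Set (ι → ℝ) :=
  {a ∈ gardingCone s k | 1 ≤ esymmOn s k a}

theorem convex_gardingSuperlevel (s : Finset ι) (k : ℕ) : Convex ℝ (gardingSuperlevel s k) := by
  convert (concaveOn_log_esymmOn s k).convex_ge 0 using 1
  ext a
  exact and_congr_right fun ha => (log_nonneg_iff (ha k le_rfl)).symm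

theorem esymmOn_succ_lt_esymmOn_add (ha : a ∈ gardingCone s (k + 1))
    (hb : b ∈ gardingCone s (k + 1)) (hle : esymmOn s k a ≤ esymmOn s k (a + b)) :
    esymmOn s (k + 1) a < esymmOn s (k + 1) (a + b) := by
  have hak := gardingCone_anti s k.le_succ ha
  have hab := add_mem_gardingCone hak (gardingCone_anti s k.le_succ hb)
  have hratio := esymmRatio_superadditive ha hb
  rw [esymmOn_succ_eq_mul_esymmRatio hak, esymmOn_succ_eq_mul_esymmRatio hab]
  exact mul_lt_mul' hle ((lt_add_of_pos_right _ (esymmRatio_pos hb)).trans_le hratio)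
    (esymmRatio_pos ha).le (hab k le_rfl)

theorem esymmOn_le_esymmOn_add (ha : a ∈ gardingCone s k) (hb : b ∈ gardingCone s k) :
    esymmOn s k a ≤ esymmOn s k (a + b) := by
  induction k with
  | zero => simp
  | succ k ih =>
    exact (esymmOn_succ_lt_esymmOn_add ha hb
      (ih (gardingCone_anti s k.le_succ ha) (gardingCone_anti s k.le_succ hb))).le

theorem esymmOn_lt_esymmOn_add (hk : k ≠ 0) (ha : a ∈ gardingCone s k)
    (hb : b ∈ gardingCone s k) : esymmOn s k a < esymmOn s k (a + b) := by
  obtain ⟨k, rfl⟩ := Nat.exists_eq_succ_of_ne_zero hk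
  exact esymmOn_succ_lt_esymmOn_add ha hb (esymmOn_le_esymmOn_add
    (gardingCone_anti s k.le_succ ha) (gardingCone_anti s k.le_succ hb))

end Concavity

/-! ### The eigenvalues of a convex combination -/

section EigenvalueConvexity

open Matrix

variable {ι : Type*} [Fintype ι] [DecidableEq ι] {k : ℕ}

theorem mulVec_mem_gardingSuperlevel {S : Matrix ι ι ℝ} (hS : S ∈ doublyStochastic ℝ ι)
    {a : ι → ℝ} (ha : a ∈ gardingSuperlevel Finset.univ k) :
    S *ᵥ a ∈ gardingSuperlevel Finset.univ k := by
  obtain ⟨w, hw_nonneg, hw_sum, rfl⟩ := exists_eq_sum_perm_of_mem_doublyStochastic hS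
  simp only [sum_mulVec, smul_mulVec, permMatrix_mulVec]
  refine (convex_gardingSuperlevel _ k).sum_mem (fun σ _ => hw_nonneg σ) hw_sum fun σ _ => ?_
  exact ⟨fun j hj => (esymmOn_univ_comp_perm σ j a).symm ▸ ha.1 j hj,
    (esymmOn_univ_comp_perm σ k a).symm ▸ ha.2⟩

theorem map_sq_mem_doublyStochastic {W : Matrix ι ι ℝ} (hW : W ∈ unitaryGroup ι ℝ) :
    W.map (· ^ 2) ∈ doublyStochastic ℝ ι := by
  refine mem_doublyStochastic_iff_sum.2 ⟨fun i j => sq_nonneg _, fun i => ?_, fun j => ?_⟩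
  · simpa [mul_apply, sq] using congrFun₂ (mem_unitaryGroup_iff.1 hW) i i
  · simpa [mul_apply, sq] using congrFun₂ (mem_unitaryGroup_iff'.1 hW) j j

theorem diag_mul_diagonal_mul_star (W : Matrix ι ι ℝ) (a : ι → ℝ) :
    (W * diagonal a * star W).diag = W.map (· ^ 2) *ᵥ a := by
  ext i
  rw [diag_apply, mul_apply, mulVec, dotProduct]
  simp only [mul_diagonal, star_apply, star_trivial, map_apply]
  exact Finset.sum_congr rfl fun j _ => by ring

/-- The symmetric matrices whose eigenvalue vector lies in `Γ_k` and satisfies `S_k ≥ 1`. -/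
def eigenvalueSuperlevel (ι : Type*) [Fintype ι] [DecidableEq ι] (k : ℕ) : Set (Matrix ι ι ℝ) :=
  {M | ∃ hM : M.IsHermitian, hM.eigenvalues ∈ gardingSuperlevel Finset.univ k}

theorem diag_star_mul_mul_mem_gardingSuperlevel {M V : Matrix ι ι ℝ}
    (hM : M ∈ eigenvalueSuperlevel ι k) (hV : V ∈ unitaryGroup ι ℝ) :
    (star V * M * V).diag ∈ gardingSuperlevel Finset.univ k := by
  obtain ⟨hM, hmem⟩ := hM
  have hW : star V * (hM.eigenvectorUnitary : Matrix ι ι ℝ) ∈ unitaryGroup ι ℝ :=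
    mul_mem (Unitary.star_mem hV) hM.eigenvectorUnitary.2
  have hconj : star V * M * V = (star V * (hM.eigenvectorUnitary : Matrix ι ι ℝ)) *
      diagonal hM.eigenvalues * star (star V * (hM.eigenvectorUnitary : Matrix ι ι ℝ)) := by
    conv_lhs => rw [hM.spectral_theorem, Unitary.conjStarAlgAut_apply]
    simp [mul_assoc]
  rw [hconj, diag_mul_diagonal_mul_star]
  exact mulVec_mem_gardingSuperlevel (map_sq_mem_doublyStochastic hW) hmem

theorem diag_star_eigenvectorUnitary_mul_mul {M : Matrix ι ι ℝ} (hM : M.IsHermitian) :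
    (star (hM.eigenvectorUnitary : Matrix ι ι ℝ) * M * hM.eigenvectorUnitary).diag =
      hM.eigenvalues := by
  have h := hM.conjStarAlgAut_star_eigenvectorUnitary
  rw [Unitary.conjStarAlgAut_star_apply] at h
  simp [h]

-- In an eigenbasis of the sum, the diagonals of the summands are obtained from their eigenvalues
-- by doubly stochastic matrices, and the eigenvalues of the sum are the sum of these diagonals.
theorem convex_eigenvalueSuperlevel (k : ℕ) : Convex ℝ (eigenvalueSuperlevel ι k) := by
  intro M hM N hN x y hx hy hxy
  have hA : (x • M + y • N).IsHermitian :=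
    (hM.1.smul (IsSelfAdjoint.all x)).add (hN.1.smul (IsSelfAdjoint.all y))
  refine ⟨hA, ?_⟩
  have hV := hA.eigenvectorUnitary.2
  rw [← diag_star_eigenvectorUnitary_mul_mul hA]
  simpa [mul_add, add_mul] using convex_gardingSuperlevel Finset.univ k
    (diag_star_mul_mul_mem_gardingSuperlevel hM hV)
    (diag_star_mul_mul_mem_gardingSuperlevel hN hV) hx hy hxy

theorem one_lt_esymmOn_eigenvalues_add (hk : k ≠ 0) (hk' : k ≤ Fintype.card ι)
    {M P : Matrix ι ι ℝ} (hM : M ∈ eigenvalueSuperlevel ι k) (hP : P.PosDef) :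
    1 < esymmOn Finset.univ k (hM.1.add hP.1).eigenvalues := by
  set U := (hM.1.add hP.1).eigenvectorUnitary
  have hU : Function.Injective (U : Matrix ι ι ℝ).mulVec :=
    mulVec_injective_of_isUnit (Unitary.isUnit_coe)
  have hdiag : (hM.1.add hP.1).eigenvalues = (star (U : Matrix ι ι ℝ) * M * U).diag +
      (star (U : Matrix ι ι ℝ) * P * U).diag := by
    rw [← diag_star_eigenvectorUnitary_mul_mul, ← diag_add, mul_add, add_mul]
  have hMdiag := diag_star_mul_mul_mem_gardingSuperlevel hM U.2
  have hPdiag : (star (U : Matrix ι ι ℝ) * P * U).diag ∈ gardingCone Finset.univ k :=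
    mem_gardingCone_of_pos (fun _ _ => (hP.conjTranspose_mul_mul_same hU).diag_pos) hk'
  rw [hdiag]
  exact hMdiag.2.trans_lt (esymmOn_lt_esymmOn_add hk hMdiag.1 hPdiag)

theorem esymmOn_eigenvalues {M : Matrix ι ι ℝ} (hM : M.IsHermitian) {j : ℕ}
    (hj : j ≤ Fintype.card ι) :
    esymmOn Finset.univ j hM.eigenvalues =
      (-1) ^ j * M.charpoly.coeff (Fintype.card ι - j) := by
  have hvieta := Polynomial.coeff_eq_esymm_roots_of_splits hM.splits_charpoly
    (k := Fintype.card ι - j) (by rw [charpoly_natDegree_eq_dim]; exact Nat.sub_le _ _)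
  rw [charpoly_natDegree_eq_dim, Nat.sub_sub_self hj, M.charpoly_monic.leadingCoeff, one_mul,
    hM.roots_charpoly_eq_eigenvalues] at hvieta
  rw [hvieta, ← mul_assoc, ← mul_pow]
  simp [esymmOn]

end EigenvalueConvexity

/-! ### Second differences -/

section SecondDifference

variable {E : Type*}

/-- The symmetric second difference of `u` at `x` with step `v`. -/
def secondDiff [AddCommGroup E] (u : E → ℝ) (v x : E) : ℝ := u (x + v) + u (x - v) - 2 * u x

theorem secondDiff_comm [AddCommGroup E] (u : E → ℝ) (v w x : E) :
    secondDiff (secondDiff u w) v x = secondDiff (secondDiff u v) w x := by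
  simp only [secondDiff, add_right_comm x v w, sub_right_comm x v w, add_sub_right_comm x v w,
    add_sub_right_comm x w v]
  ring

variable [NormedAddCommGroup E]

theorem secondDiff_norm_sub_sq [InnerProductSpace ℝ E] (z v x : E) :
    secondDiff (fun y => ‖y - z‖ ^ 2) v x = 2 * ‖v‖ ^ 2 := by
  have h := parallelogram_law_with_norm ℝ (x - z) v
  rw [secondDiff, add_sub_right_comm x v z, sub_right_comm x v z]
  linarith

variable [NormedSpace ℝ E] {u : E → ℝ} {v x : E}

theorem hasDerivAt_comp_add_smul {F : Type*} [NormedAddCommGroup F] [NormedSpace ℝ F] {f : E → F}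
    {t : ℝ} (hf : DifferentiableAt ℝ f (x + t • v)) :
    HasDerivAt (fun s => f (x + s • v)) (fderiv ℝ f (x + t • v) v) t := by
  simpa [Function.comp_def] using
    hf.hasFDerivAt.comp_hasDerivAt t (((hasDerivAt_id t).smul_const v).const_add x)

theorem exists_secondDiff_eq (hu : ∀ t ∈ Set.Icc (-1 : ℝ) 1, ContDiffAt ℝ 2 u (x + t • v)) :
    ∃ t ∈ Set.Icc (-1 : ℝ) 1,
      secondDiff u v x = fderiv ℝ (fderiv ℝ u) (x + t • v) v v := by
  have hu₁ {t : ℝ} (ht : t ∈ Set.Icc (-1 : ℝ) 1) :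
      HasDerivAt (fun s => u (x + s • v)) (fderiv ℝ u (x + t • v) v) t :=
    hasDerivAt_comp_add_smul ((hu t ht).differentiableAt (by simp))
  have hu₂ {t : ℝ} (ht : t ∈ Set.Icc (-1 : ℝ) 1) : HasDerivAt (fun s => fderiv ℝ u (x + s • v) v)
      (fderiv ℝ (fderiv ℝ u) (x + t • v) v v) t :=
    (hasDerivAt_comp_add_smul (((hu t ht).fderiv_right (m := 1) (by norm_num)).differentiableAt
      (by simp))).clm_apply (hasDerivAt_const t v) |>.congr_deriv (by simp)
  have hg {s : ℝ} (hs : s ∈ Set.Icc (0 : ℝ) 1) :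
      HasDerivAt (fun s => u (x + s • v) - u (x + (s - 1) • v))
        (fderiv ℝ u (x + s • v) v - fderiv ℝ u (x + (s - 1) • v) v) s :=
    (hu₁ ⟨by linarith [hs.1], hs.2⟩).sub
      ((hu₁ ⟨by linarith [hs.1], by linarith [hs.2]⟩).comp_sub_const s 1)
  obtain ⟨s, hs, hslope⟩ := exists_hasDerivAt_eq_slope _ _ zero_lt_one
    (fun s hs => (hg hs).continuousAt.continuousWithinAt)
    (fun s hs => hg (Set.Ioo_subset_Icc_self hs))
  have hsub : Set.Icc (s - 1) s ⊆ Set.Icc (-1 : ℝ) 1 :=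
    Set.Icc_subset_Icc (by linarith [hs.1]) hs.2.le
  obtain ⟨t, ht, hslope'⟩ := exists_hasDerivAt_eq_slope _ _ (sub_one_lt s)
    (fun t ht => (hu₂ (hsub ht)).continuousAt.continuousWithinAt)
    (fun t ht => hu₂ (hsub (Set.Ioo_subset_Icc_self ht)))
  refine ⟨t, hsub (Set.Ioo_subset_Icc_self ht), ?_⟩
  rw [hslope', sub_sub_cancel, div_one, hslope, secondDiff]
  simp only [one_smul, zero_smul, sub_self, zero_sub, neg_smul, add_zero, sub_zero, div_one,
    ← sub_eq_add_neg]
  ring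

theorem eventually_forall_add_smul_smul {p : E → Prop} (hp : ∀ᶠ y in 𝓝 x, p y) (v : E) :
    ∀ᶠ q : ℝ × E in 𝓝 (0, x), ∀ t ∈ Set.Icc (-1 : ℝ) 1, p (q.2 + t • q.1 • v) := by
  refine isCompact_Icc.eventually_forall_of_forall_eventually fun t _ => ?_
  have hline :
      Tendsto (fun q : (ℝ × E) × ℝ => q.1.2 + q.2 • q.1.1 • v) (𝓝 ((0, x), t)) (𝓝 x) :=
    Continuous.tendsto' (by fun_prop) _ _ (by simp)
  exact hline.eventually hp

theorem continuousAt_fderiv_fderiv_apply (hu : ContDiffAt ℝ 2 u x) (v w : E) :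
    ContinuousAt (fun y => fderiv ℝ (fderiv ℝ u) y v w) x :=
  (((hu.fderiv_right (m := 1) (by norm_num)).fderiv_right (m := 0)
    (by norm_num)).continuousAt.clm_apply continuousAt_const).clm_apply continuousAt_const

theorem tendsto_secondDiff_smul_div_sq (hu : ContDiffAt ℝ 2 u x) (v : E) :
    Tendsto (fun p : ℝ × E => secondDiff u (p.1 • v) p.2 / p.1 ^ 2) (𝓝[>] 0 ×ˢ 𝓝 x)
      (𝓝 (fderiv ℝ (fderiv ℝ u) x v v)) := by
  refine tendsto_iff_eventually.2 fun P hP => ?_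
  have hle : 𝓝[>] (0 : ℝ) ×ˢ 𝓝 x ≤ 𝓝 (0, x) :=
    nhds_prod_eq (x := (0 : ℝ)) (y := x) ▸ prod_mono_left _ nhdsWithin_le_nhds
  have hsegment := (eventually_forall_add_smul_smul ((hu.eventually (by simp)).and
    ((continuousAt_fderiv_fderiv_apply hu v v).eventually hP)) v).filter_mono hle
  have hpos : ∀ᶠ p : ℝ × E in 𝓝[>] 0 ×ˢ 𝓝 x, 0 < p.1 := tendsto_fst.eventually self_mem_nhdsWithin
  filter_upwards [hsegment, hpos] with p hp hpos
  obtain ⟨t, ht, heq⟩ := exists_secondDiff_eq fun t ht => (hp t ht).1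
  have hquot : secondDiff u (p.1 • v) p.2 / p.1 ^ 2 =
      fderiv ℝ (fderiv ℝ u) (p.2 + t • p.1 • v) v v := by
    rw [heq, div_eq_iff (pow_ne_zero 2 hpos.ne')]
    simp only [map_smul, smul_apply, smul_eq_mul]
    ring
  exact hquot ▸ (hp t ht).2

theorem tendsto_secondDiff_secondDiff_smul_div_sq (v : E) {w : E} (hu : ContDiffAt ℝ 2 u x)
    (hadd : ContDiffAt ℝ 2 u (x + w)) (hsub : ContDiffAt ℝ 2 u (x - w)) :
    Tendsto (fun t : ℝ => secondDiff (secondDiff u (t • v)) w x / t ^ 2) (𝓝[>] 0)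
      (𝓝 (secondDiff (fun y => fderiv ℝ (fderiv ℝ u) y v v) w x)) := by
  have hpoint {y : E} (hy : ContDiffAt ℝ 2 u y) :
      Tendsto (fun t : ℝ => secondDiff u (t • v) y / t ^ 2) (𝓝[>] 0)
        (𝓝 (fderiv ℝ (fderiv ℝ u) y v v)) := by
    have hslice : Tendsto (fun t : ℝ => (t, y)) (𝓝[>] 0) (𝓝[>] 0 ×ˢ 𝓝 y) :=
      tendsto_id.prodMk tendsto_const_nhds
    simpa only [Function.comp_def] using (tendsto_secondDiff_smul_div_sq hy v).comp hslice
  have hsum := ((hpoint hadd).add (hpoint hsub)).sub ((hpoint hu).const_mul 2)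
  refine hsum.congr fun t => ?_
  rw [secondDiff.eq_def (secondDiff u _)]
  ring

theorem eventually_secondDiff_smul_nonpos {f : E → ℝ} (hf : IsLocalMax f x) (v : E) :
    ∀ᶠ t : ℝ in 𝓝 0, secondDiff f (t • v) x ≤ 0 := by
  have hadd : Tendsto (fun t : ℝ => x + t • v) (𝓝 0) (𝓝 x) :=
    Continuous.tendsto' (by fun_prop) _ _ (by simp)
  have hsub : Tendsto (fun t : ℝ => x - t • v) (𝓝 0) (𝓝 x) :=
    Continuous.tendsto' (by fun_prop) _ _ (by simp)
  filter_upwards [hadd.eventually hf, hsub.eventually hf] with t hadd hsub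
  rw [secondDiff]
  linarith

end SecondDifference

section DiscreteMaximumPrinciple

variable {E : Type*} [NormedAddCommGroup E] [InnerProductSpace ℝ E] {u : E → ℝ} {x : E}

theorem sum_secondDiff_fderiv_fderiv_le {ι : Type*} [Fintype ι] {w : ι → E} {c : ℝ} {z : E}
    (hu : ContDiffAt ℝ 2 u x) (hadd : ∀ i, ContDiffAt ℝ 2 u (x + w i))
    (hsub : ∀ i, ContDiffAt ℝ 2 u (x - w i))
    (hmax : IsLocalMax (fun y => ∑ i, secondDiff u (w i) y + c * ‖y - z‖ ^ 2) x) (v : E) :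
    ∑ i, secondDiff (fun y => fderiv ℝ (fderiv ℝ u) y v v) (w i) x ≤ -(2 * c * ‖v‖ ^ 2) := by
  have hlim := tendsto_finsetSum Finset.univ fun i _ =>
    tendsto_secondDiff_secondDiff_smul_div_sq v hu (hadd i) (hsub i)
  refine le_of_tendsto hlim ?_
  filter_upwards [(eventually_secondDiff_smul_nonpos hmax v).filter_mono nhdsWithin_le_nhds,
    self_mem_nhdsWithin] with t hle (ht : 0 < t)
  have hsplit : secondDiff (fun y => ∑ i, secondDiff u (w i) y + c * ‖y - z‖ ^ 2) (t • v) x =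
      ∑ i, secondDiff (secondDiff u (t • v)) (w i) x + c * (2 * ‖t • v‖ ^ 2) := by
    simp only [secondDiff_comm u (w _), ← secondDiff_norm_sub_sq z (t • v) x]
    simp only [secondDiff, Finset.sum_add_distrib, Finset.sum_sub_distrib, ← Finset.mul_sum]
    ring
  rw [hsplit, norm_smul, norm_of_nonneg ht.le] at hle
  rw [← Finset.sum_div, div_le_iff₀ (by positivity)]
  linarith

end DiscreteMaximumPrinciple

/-! ### Hessian matrices of solutions -/

section Hessian

open Matrix

variable {n k : ℕ} {u : Euc n → ℝ} {x : Euc n}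

theorem hessMat_apply (i j : Fin n) :
    hessMat n u x i j = fderiv ℝ (fderiv ℝ u) x (ebasis n i) (ebasis n j) := by
  simp [hessMat, iteratedFDeriv_two_apply]

theorem isHermitian_hessMat (hu : ContDiffAt ℝ 2 u x) : (hessMat n u x).IsHermitian := by
  ext i j
  simpa [hessMat_apply] using hu.isSymmSndFDerivAt (by simp) (ebasis n j) (ebasis n i)

theorem dotProduct_hessMat_mulVec (u : Euc n → ℝ) (x : Euc n) (v : Fin n → ℝ) :
    v ⬝ᵥ hessMat n u x *ᵥ v = fderiv ℝ (fderiv ℝ u) x (WithLp.toLp 2 v) (WithLp.toLp 2 v) := by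
  have hv : WithLp.toLp 2 v = ∑ i, v i • ebasis n i := by
    simpa [ebasis] using ((EuclideanSpace.basisFun (Fin n) ℝ).sum_repr (WithLp.toLp 2 v)).symm
  simp only [hv, map_sum, map_smul, _root_.sum_apply, _root_.smul_apply, dotProduct, mulVec,
    hessMat_apply, smul_eq_mul, Finset.mul_sum]
  rw [Finset.sum_comm]
  exact Finset.sum_congr rfl fun i _ => Finset.sum_congr rfl fun j _ => by ring

theorem continuousOn_lapl {U : Set (Euc n)} (hu : ∀ x ∈ U, ContDiffAt ℝ 2 u x) :
    ContinuousOn (lapl n u) U := by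
  refine continuousOn_finsetSum _ fun i _ x hx => ?_
  simpa only [hessMat_apply] using
    (continuousAt_fderiv_fderiv_apply (hu x hx) _ _).continuousWithinAt

theorem matSk_eq_esymmOn {M : Matrix (Fin n) (Fin n) ℝ} (hM : M.IsHermitian) {j : ℕ}
    (hj : j ≤ n) : matSk n j M = esymmOn Finset.univ j hM.eigenvalues := by
  rw [matSk, esymmOn_eigenvalues hM (by simpa using hj), Fintype.card_fin]

theorem hessMat_mem_eigenvalueSuperlevel {U : Set (Euc n)} (hkn : k ≤ n)
    (hconv : KConvexOn n k u U) (hx : x ∈ U) (hu : ContDiffAt ℝ 2 u x)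
    (hS : 1 ≤ SkHess n k u x) : hessMat n u x ∈ eigenvalueSuperlevel (Fin n) k := by
  have hM := isHermitian_hessMat hu
  refine ⟨hM, fun j hj => ?_, (matSk_eq_esymmOn hM hkn).symm ▸ hS⟩
  rcases Nat.eq_zero_or_pos j with rfl | hj₀
  · simp
  · exact matSk_eq_esymmOn hM (hj.trans hkn) ▸ hconv x hx j hj₀ hj

theorem one_lt_matSk_add (hk : k ≠ 0) (hkn : k ≤ n) {M P : Matrix (Fin n) (Fin n) ℝ}
    (hM : M ∈ eigenvalueSuperlevel (Fin n) k) (hP : P.PosDef) : 1 < matSk n k (M + P) := by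
  rw [matSk_eq_esymmOn (hM.1.add hP.1) hkn]
  exact one_lt_esymmOn_eigenvalues_add hk (by simpa using hkn) hM hP

/-- The mean of the Hessian matrices of `u` at the points `x ± w i`. -/
noncomputable def hessMean {ι : Type*} [Fintype ι] (u : Euc n → ℝ) (w : ι → Euc n) (x : Euc n) :
    Matrix (Fin n) (Fin n) ℝ :=
  ∑ i, (Fintype.card ι : ℝ)⁻¹ •
    ((2⁻¹ : ℝ) • hessMat n u (x + w i) + (2⁻¹ : ℝ) • hessMat n u (x - w i))

variable {ι : Type*} [Fintype ι] [Nonempty ι] {w : ι → Euc n}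

theorem hessMean_mem {K : Set (Matrix (Fin n) (Fin n) ℝ)} (hK : Convex ℝ K)
    (hadd : ∀ i, hessMat n u (x + w i) ∈ K) (hsub : ∀ i, hessMat n u (x - w i) ∈ K) :
    hessMean u w x ∈ K :=
  hK.sum_mem (fun _ _ => by positivity) (by simp) fun i _ =>
    hK (hadd i) (hsub i) (by positivity) (by positivity) (by norm_num)

theorem dotProduct_hessMat_sub_hessMean_mulVec (u : Euc n → ℝ) (w : ι → Euc n) (x : Euc n)
    (v : Fin n → ℝ) :
    v ⬝ᵥ (hessMat n u x - hessMean u w x) *ᵥ v = -(2 * (Fintype.card ι : ℝ))⁻¹ *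
      ∑ i, secondDiff (fun y => v ⬝ᵥ hessMat n u y *ᵥ v) (w i) x := by
  simp only [hessMean, secondDiff, sub_mulVec, sum_mulVec, smul_mulVec, add_mulVec, dotProduct_sub,
    dotProduct_sum, dotProduct_smul, dotProduct_add, smul_eq_mul, Finset.sum_sub_distrib,
    Finset.sum_add_distrib, ← Finset.mul_sum, Finset.sum_const, Finset.card_univ, nsmul_eq_mul]
  field_simp
  ring

-- At a maximum the Hessian of `u` would exceed the mean of the neighbouring Hessians by a positive
-- definite matrix; but that mean already satisfies `S_k ≥ 1`, by convexity.
theorem not_isLocalMax_sum_secondDiff_add (hk : k ≠ 0) (hkn : k ≤ n) {U : Set (Euc n)}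
    (hu : ∀ y ∈ U, ContDiffAt ℝ 2 u y) (hconv : KConvexOn n k u U)
    (heq : ∀ y ∈ U, SkHess n k u y = 1) {c : ℝ} (hc : 0 < c) (z : Euc n) (hx : x ∈ U)
    (hadd : ∀ i, x + w i ∈ U) (hsub : ∀ i, x - w i ∈ U) :
    ¬ IsLocalMax (fun y => ∑ i, secondDiff u (w i) y + c * ‖y - z‖ ^ 2) x := by
  intro hmax
  have hmem {y : Euc n} (hy : y ∈ U) : hessMat n u y ∈ eigenvalueSuperlevel (Fin n) k :=
    hessMat_mem_eigenvalueSuperlevel hkn hconv hy (hu y hy) (heq y hy).ge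
  have hmean : hessMean u w x ∈ eigenvalueSuperlevel (Fin n) k :=
    hessMean_mem (convex_eigenvalueSuperlevel k) (fun i => hmem (hadd i)) fun i => hmem (hsub i)
  have hpos : (hessMat n u x - hessMean u w x).PosDef := by
    refine .of_dotProduct_mulVec_pos ((hmem hx).1.sub hmean.1) fun v hv => ?_
    have hle := sum_secondDiff_fderiv_fderiv_le (hu x hx) (fun i => hu _ (hadd i))
      (fun i => hu _ (hsub i)) hmax (WithLp.toLp 2 v)
    simp only [← dotProduct_hessMat_mulVec] at hle
    have hv' : WithLp.toLp 2 v ≠ 0 := by simpa using hv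
    rw [star_trivial, dotProduct_hessMat_sub_hessMean_mulVec, neg_mul, ← mul_neg]
    exact mul_pos (by positivity) ((by positivity : 0 < 2 * c * ‖WithLp.toLp 2 v‖ ^ 2).trans_le
      (le_neg_of_le_neg hle))
  have hlt := one_lt_matSk_add hk hkn hmean hpos
  rw [add_sub_cancel] at hlt
  exact hlt.ne' (heq x hx)

end Hessian

/-! ### Discrete Laplacians and perturbed maxima -/

section DiscreteLaplacian

variable {n : ℕ} {u : Euc n → ℝ}

/-- The second-order finite-difference approximation of the Laplacian with mesh size `h`. -/
noncomputable def discreteLapl (n : ℕ) (h : ℝ) (u : Euc n → ℝ) (x : Euc n) : ℝ :=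
  (∑ i, secondDiff u (h • ebasis n i) x) / h ^ 2

theorem tendsto_discreteLapl {x : Euc n} (hu : ContDiffAt ℝ 2 u x) :
    Tendsto (fun p : ℝ × Euc n => discreteLapl n p.1 u p.2) (𝓝[>] 0 ×ˢ 𝓝 x)
      (𝓝 (lapl n u x)) := by
  simp only [discreteLapl, lapl, Finset.sum_div, hessMat_apply]
  exact tendsto_finsetSum _ fun i _ => tendsto_secondDiff_smul_div_sq hu (ebasis n i)

theorem tendstoUniformlyOn_discreteLapl {K : Set (Euc n)} (hK : IsCompact K)
    (hu : ∀ x ∈ K, ContDiffAt ℝ 2 u x) :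
    TendstoUniformlyOn (fun h => discreteLapl n h u) (lapl n u) (𝓝[>] 0) K := by
  rw [← tendstoLocallyUniformlyOn_iff_tendstoUniformlyOn_of_compact hK,
    tendstoLocallyUniformlyOn_iff_forall_tendsto]
  intro x hx
  have hlapl : Tendsto (fun p : ℝ × Euc n => lapl n u p.2) (𝓝[>] 0 ×ˢ 𝓝[K] x)
      (𝓝 (lapl n u x)) :=
    (continuousOn_lapl hu x hx).tendsto.comp tendsto_snd
  have hdiscrete := (tendsto_discreteLapl (hu x hx)).mono_left
    (prod_mono_right (𝓝[>] 0) (nhdsWithin_le_nhds (s := K)))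
  exact (hlapl.prodMk_nhds hdiscrete).mono_right (nhds_le_uniformity _)

theorem add_smul_ebasis_mem_ball {x y : Euc n} {r h : ℝ} (hy : y ∈ Metric.closedBall x r)
    (hh : |h| < r) (i : Fin n) : y + h • ebasis n i ∈ Metric.ball x (2 * r) := by
  have hnorm : ‖h • ebasis n i‖ = |h| := by simp [ebasis, norm_smul]
  rw [mem_closedBall_iff_norm] at hy
  rw [mem_ball_iff_norm, add_sub_right_comm]
  linarith [norm_add_le (y - x) (h • ebasis n i)]

theorem sub_smul_ebasis_mem_ball {x y : Euc n} {r h : ℝ} (hy : y ∈ Metric.closedBall x r)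
    (hh : |h| < r) (i : Fin n) : y - h • ebasis n i ∈ Metric.ball x (2 * r) := by
  simpa [sub_eq_add_neg] using add_smul_ebasis_mem_ball hy (h := -h) (by rwa [abs_neg]) i

theorem continuousOn_discreteLapl {x : Euc n} {r h : ℝ} (hh : |h| < r)
    (hu : ContinuousOn u (Metric.ball x (2 * r))) :
    ContinuousOn (discreteLapl n h u) (Metric.closedBall x r) := by
  refine (continuousOn_finsetSum _ fun i _ => ?_).div_const _
  refine ((hu.comp (by fun_prop) fun y hy => add_smul_ebasis_mem_ball hy hh i).add
    (hu.comp (by fun_prop) fun y hy => sub_smul_ebasis_mem_ball hy hh i)).sub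
    ((hu.mono fun y hy => ?_).const_smul (2 : ℝ))
  exact Metric.closedBall_subset_ball (by linarith [abs_nonneg h]) hy

theorem eventually_exists_isLocalMax {X α : Type*} [TopologicalSpace X] {l : Filter α}
    {F : α → X → ℝ} {f : X → ℝ} {K s : Set X} {x : X} {δ : ℝ} (hK : IsCompact K)
    (hs : IsOpen s) (hsK : s ⊆ K) (hx : x ∈ K) (hδ : 0 < δ)
    (hf : ∀ y ∈ K \ s, f y + δ ≤ f x) (hF : TendstoUniformlyOn F f l K)
    (hcont : ∀ᶠ a in l, ContinuousOn (F a) K) : ∀ᶠ a in l, ∃ y ∈ s, IsLocalMax (F a) y := by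
  filter_upwards [Metric.tendstoUniformlyOn_iff.1 hF (δ / 2) (half_pos hδ), hcont]
    with a hclose hcont
  refine hK.exists_isLocalMax_mem_open hsK hcont hx (fun y hy => ?_) hs
  have hxa := abs_lt.1 (hclose x hx)
  have hya := abs_lt.1 (hclose y hy.1)
  linarith [hf y hy, hxa.2, hya.1]

theorem eventually_exists_isLocalMax_discreteLapl_add {g : Euc n → ℝ} (hg : Continuous g)
    {x : Euc n} {r δ : ℝ} (hr : 0 < r) (hδ : 0 < δ)
    (hu : ∀ y ∈ Metric.ball x (2 * r), ContDiffAt ℝ 2 u y)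
    (hstrict : ∀ y ∈ Metric.closedBall x r \ Metric.ball x r,
      lapl n u y + g y + δ ≤ lapl n u x + g x) :
    ∀ᶠ h in 𝓝[>] 0, ∃ y ∈ Metric.ball x r, IsLocalMax (fun y => discreteLapl n h u y + g y) y := by
  have hunif : TendstoUniformlyOn (fun h y => discreteLapl n h u y + g y)
      (fun y => lapl n u y + g y) (𝓝[>] 0) (Metric.closedBall x r) := by
    simpa [Metric.tendstoUniformlyOn_iff] using Metric.tendstoUniformlyOn_iff.1
      (tendstoUniformlyOn_discreteLapl (isCompact_closedBall x r) fun y hy =>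
        hu y (Metric.closedBall_subset_ball (by linarith) hy))
  refine eventually_exists_isLocalMax (isCompact_closedBall x r) Metric.isOpen_ball
    Metric.ball_subset_closedBall (Metric.mem_closedBall_self hr.le) hδ hstrict hunif ?_
  filter_upwards [Ioo_mem_nhdsGT hr] with h hh
  exact (continuousOn_discreteLapl (abs_lt.2 ⟨by linarith [hh.1], hh.2⟩) fun y hy =>
    (hu y hy).continuousAt.continuousWithinAt).add hg.continuousOn

end DiscreteLaplacian

/-! ### The maximum principle -/

section MaximumPrinciple

variable {n k : ℕ} {u : Euc n → ℝ}

theorem add_half_mul_norm_sub_neg_sq {E : Type*} [NormedAddCommGroup E] [InnerProductSpace ℝ E]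
    (ε : ℝ) (x y : E) : ε / 2 * ‖y - -x‖ ^ 2 =
      ε * ‖y‖ ^ 2 + ε * ‖x‖ ^ 2 - ε / 2 * ‖y - x‖ ^ 2 := by
  have h := parallelogram_law_with_norm ℝ y x
  rw [sub_neg_eq_add]
  linear_combination (ε / 2) * h

theorem not_isLocalMax_discreteLapl_add (hk : k ≠ 0) (hkn : k ≤ n) {U : Set (Euc n)}
    (hu : ∀ x ∈ U, ContDiffAt ℝ 2 u x) (hconv : KConvexOn n k u U)
    (heq : ∀ x ∈ U, SkHess n k u x = 1) {c : ℝ} (hc : 0 < c) (z : Euc n) {h : ℝ} (hh : h ≠ 0)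
    {x : Euc n} (hx : x ∈ U) (hadd : ∀ i, x + h • ebasis n i ∈ U)
    (hsub : ∀ i, x - h • ebasis n i ∈ U) :
    ¬ IsLocalMax (fun y => discreteLapl n h u y + c * ‖y - z‖ ^ 2) x := by
  intro hmax
  have : Nonempty (Fin n) := ⟨⟨0, by lia⟩⟩
  have hscale (y : Euc n) : h ^ 2 * (discreteLapl n h u y + c * ‖y - z‖ ^ 2) =
      ∑ i, secondDiff u (h • ebasis n i) y + h ^ 2 * c * ‖y - z‖ ^ 2 := by
    rw [discreteLapl]
    field_simp
  refine not_isLocalMax_sum_secondDiff_add hk hkn hu hconv heq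
    (by positivity : 0 < h ^ 2 * c) z hx hadd hsub ?_
  simpa only [Function.comp_def, hscale] using
    hmax.comp_mono (monotone_mul_left_of_nonneg (sq_nonneg h))

-- A local maximum `x` of `Δu + ε|y|²` is a strict local maximum of `Δu + (ε/2)|y + x|²`, so the
-- discrete Laplacians inherit a local maximum nearby.
theorem not_isLocalMax_lapl_add (hk : k ≠ 0) (hkn : k ≤ n) {U : Set (Euc n)} (hU : IsOpen U)
    (hu : ∀ x ∈ U, ContDiffAt ℝ 2 u x) (hconv : KConvexOn n k u U)
    (heq : ∀ x ∈ U, SkHess n k u x = 1) {ε : ℝ} (hε : 0 < ε) {x : Euc n} (hx : x ∈ U) :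
    ¬ IsLocalMax (fun y => lapl n u y + ε * ‖y‖ ^ 2) x := by
  intro hmax
  obtain ⟨ρ, hρ, hball⟩ := Metric.eventually_nhds_iff_ball.1 (hmax.and (hU.mem_nhds hx))
  obtain ⟨r, rfl⟩ : ∃ r, ρ = 2 * r := ⟨ρ / 2, by ring⟩
  have hr : 0 < r := by linarith
  have hsub : Metric.closedBall x r ⊆ Metric.ball x (2 * r) :=
    Metric.closedBall_subset_ball (by linarith)
  have hstrict : ∀ y ∈ Metric.closedBall x r \ Metric.ball x r,
      lapl n u y + ε / 2 * ‖y - -x‖ ^ 2 + ε / 2 * r ^ 2 ≤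
        lapl n u x + ε / 2 * ‖x - -x‖ ^ 2 := by
    intro y hy
    have hry : r ≤ ‖y - x‖ := by simpa [dist_eq_norm] using hy.2
    have hsq := mul_le_mul_of_nonneg_left (pow_le_pow_left₀ hr.le hry 2) (half_pos hε).le
    have hle := (hball y (hsub hy.1)).1
    simp only [add_half_mul_norm_sub_neg_sq, sub_self, norm_zero]
    linarith
  obtain ⟨h, ⟨y, hy, hymax⟩, hh⟩ := ((eventually_exists_isLocalMax_discreteLapl_add
    (by fun_prop) hr (by positivity) (fun y hy => hu y (hball y hy).2) hstrict).and
      (Ioo_mem_nhdsGT hr)).exists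
  have hhr : |h| < r := abs_lt.2 ⟨by linarith [hh.1], hh.2⟩
  have hy' := Metric.ball_subset_closedBall hy
  exact not_isLocalMax_discreteLapl_add hk hkn hu hconv heq (half_pos hε) (-x) hh.1.ne'
    (hball y (hsub hy')).2
    (fun i => (hball _ (add_smul_ebasis_mem_ball hy' hhr i)).2)
    (fun i => (hball _ (sub_smul_ebasis_mem_ball hy' hhr i)).2) hymax

theorem exists_mem_frontier_isMaxOn {E : Type*} [NormedAddCommGroup E] [ProperSpace E]
    {Ω : Set E} {f : E → ℝ} (hopen : IsOpen Ω) (hbd : Bornology.IsBounded Ω)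
    (hne : Ω.Nonempty) (hf : ContinuousOn f (closure Ω))
    (hmax : ∀ ε > 0, ∀ x ∈ Ω, ¬ IsLocalMax (fun y => f y + ε * ‖y‖ ^ 2) x) :
    ∃ x ∈ frontier Ω, IsMaxOn f (closure Ω) x := by
  have hcompact : IsCompact (closure Ω) := hbd.isCompact_closure
  have hperturbed {ε : ℝ} (hε : 0 < ε) :
      ∃ x ∈ frontier Ω, IsMaxOn (fun y => f y + ε * ‖y‖ ^ 2) (closure Ω) x := by
    obtain ⟨x, hx, hxmax⟩ := hcompact.exists_isMaxOn hne.closure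
      (hf.add (g := fun y => ε * ‖y‖ ^ 2) (by fun_prop))
    refine ⟨x, ⟨hx, fun hxΩ => ?_⟩, hxmax⟩
    rw [hopen.interior_eq] at hxΩ
    exact hmax ε hε x hxΩ
      (hxmax.isLocalMax (mem_of_superset (hopen.mem_nhds hxΩ) subset_closure))
  have hfrontier : (frontier Ω).Nonempty := let ⟨x, hx, _⟩ := hperturbed one_pos; ⟨x, hx⟩
  obtain ⟨x₀, hx₀, hx₀max⟩ := (hcompact.of_isClosed_subset isClosed_frontier
    frontier_subset_closure).exists_isMaxOn hfrontier (hf.mono frontier_subset_closure)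
  refine ⟨x₀, hx₀, fun y hy => ?_⟩
  refine le_of_forall_pos_le_add (b := f x₀) fun δ hδ => ?_
  obtain ⟨R, hR⟩ := hcompact.isBounded.exists_norm_le
  obtain ⟨x, hx, hxmax⟩ := hperturbed (ε := δ / (R ^ 2 + 1)) (by positivity)
  have hxR : ‖x‖ ^ 2 ≤ R ^ 2 + 1 :=
    (pow_le_pow_left₀ (norm_nonneg x) (hR x (frontier_subset_closure hx)) 2).trans (by linarith)
  calc f y ≤ f y + δ / (R ^ 2 + 1) * ‖y‖ ^ 2 := le_add_of_nonneg_right (by positivity)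
    _ ≤ f x + δ / (R ^ 2 + 1) * ‖x‖ ^ 2 := hxmax hy
    _ ≤ f x₀ + δ / (R ^ 2 + 1) * (R ^ 2 + 1) := by gcongr; exact hx₀max hx
    _ = f x₀ + δ := by rw [div_mul_cancel₀ _ (by positivity)]

theorem sSup_image_eq_of_isMaxOn {α : Type*} {f : α → ℝ} {s t : Set α} (hst : s ⊆ t) {x : α}
    (hx : x ∈ s) (hmax : IsMaxOn f t x) : sSup (f '' t) = sSup (f '' s) := by
  have hgreatest {r : Set α} (hxr : x ∈ r) (hrt : r ⊆ t) : IsGreatest (f '' r) (f x) :=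
    ⟨Set.mem_image_of_mem f hxr, Set.forall_mem_image.2 fun _ hy => hmax (hrt hy)⟩
  rw [(hgreatest (hst hx) subset_rfl).csSup_eq, (hgreatest hx hst).csSup_eq]

end MaximumPrinciple

theorem statement9_general (n k : ℕ) (hk1 : 1 ≤ k) (hkn : k ≤ n)
    (Ω : Set (Euc n)) (hopen : IsOpen Ω) (hbd : Bornology.IsBounded Ω) (hne : Ω.Nonempty)
    (u : Euc n → ℝ) (hu : ∀ x ∈ closure Ω, ContDiffAt ℝ 2 u x) (hconv : KConvexOn n k u Ω)
    (heq : ∀ x ∈ Ω, SkHess n k u x = 1) :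
    ∃ x₀ ∈ frontier Ω, IsMaxOn (lapl n u) (closure Ω) x₀ :=
  exists_mem_frontier_isMaxOn hopen hbd hne (continuousOn_lapl hu) fun _ hε _ hx =>
    not_isLocalMax_lapl_add (Nat.one_le_iff_ne_zero.1 hk1) hkn hopen
      (fun x hx => hu x (subset_closure hx)) hconv heq hε hx

/-- maximum principle for the Laplacian, cf. Lemma 2.7: for a `k`-convex
solution of `S_k(D²u) = 1` in a bounded domain `Ω` of class `C⁴(Ω) ∩ C²(Ω̄)`, the supremum
of `Δu` over `Ω̄` is attained on `∂Ω`. -/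
theorem statement9 (n k : ℕ) (hk1 : 1 ≤ k) (hkn : k ≤ n)
    (Ω : Set (Euc n)) (hopen : IsOpen Ω) (hbd : Bornology.IsBounded Ω)
    (hconn : IsConnected Ω)
    (u : Euc n → ℝ)
    (hu4 : ContDiffOn ℝ 4 u Ω)
    (hu2 : ∃ U : Set (Euc n), IsOpen U ∧ closure Ω ⊆ U ∧ ContDiffOn ℝ 2 u U)
    (hconv : KConvexOn n k u Ω)
    (heq : ∀ x ∈ Ω, SkHess n k u x = 1) :
    sSup ((fun x => lapl n u x) '' closure Ω) =
      sSup ((fun x => lapl n u x) '' frontier Ω) := by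
  obtain ⟨U, hU, hΩU, huU⟩ := hu2
  obtain ⟨x₀, hx₀, hmax⟩ := statement9_general n k hk1 hkn Ω hopen hbd hconn.nonempty u
    (fun x hx => huU.contDiffAt (hU.mem_nhds (hΩU hx))) hconv heq
  exact sSup_image_eq_of_isMaxOn frontier_subset_closure hx₀ hmax
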